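/- arXiv:1506.06002 — 2 statements merged into one kernel-verified Lean document; each statement's English description precedes it below -/
import Mathlib

section
/- Every element of the sister group Γ_s^(2) can be written as ε·W, where ε ∈ {1,−1} and W is a finite product of the matrices I₀ = [[0,0,i/√2],[0,1,0],[i√2,0,0]], R₁ = [[1,0,0],[0,−1,0],[0,0,1]], R₂ = [[1,2,−2],[0,−1,2],[0,0,1]], R₃ = [[1,−i√2,−1],[0,−1,i√2],[0,0,1]], T = [[1,0,i/√2],[0,1,0],[0,0,1]] and their inverses. In other words, Γ_s^(2) is generated, modulo scalar matrices ±I, by I₀, R₁, R₂, R₃, T. -/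
noncomputable section

open Matrix

/-- The Hermitian form matrix `J`. -/
def matJ : Matrix (Fin 3) (Fin 3) ℂ := !![0,0,1; 0,1,0; 1,0,0]

/-- Membership in `U(2,1;J)`. -/
def inU21 (M : Matrix (Fin 3) (Fin 3) ℂ) : Prop := IsUnit M ∧ Mᴴ * matJ * M = matJ

/-- `i√2`. -/
def isq2 : ℂ := Complex.I * (Real.sqrt 2 : ℂ)

/-- Membership in the ring of integers `O₂ = ℤ + ℤ·i√2`. -/
def inO2 (z : ℂ) : Prop := ∃ a b : ℤ, z = (a : ℂ) + (b : ℂ) * isq2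

/-- The sister group `Γ_s^(2)`. -/
def GammaS2 (M : Matrix (Fin 3) (Fin 3) ℂ) : Prop :=
  inU21 M ∧ inO2 (M 0 0) ∧ inO2 (M 0 1) ∧ inO2 (M 1 1) ∧ inO2 (M 1 2) ∧
    inO2 (M 2 2) ∧ inO2 (isq2 * M 0 2) ∧ inO2 (M 1 0 / isq2) ∧
    inO2 (M 2 0 / isq2) ∧ inO2 (M 2 1 / isq2)

def I₀ : Matrix (Fin 3) (Fin 3) ℂ :=
  !![0, 0, Complex.I / (Real.sqrt 2 : ℂ); 0, 1, 0; Complex.I * (Real.sqrt 2 : ℂ), 0, 0]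

def R₁ : Matrix (Fin 3) (Fin 3) ℂ := !![1,0,0; 0,-1,0; 0,0,1]

def R₂ : Matrix (Fin 3) (Fin 3) ℂ := !![1,2,-2; 0,-1,2; 0,0,1]

def R₃ : Matrix (Fin 3) (Fin 3) ℂ :=
  !![1, -(Complex.I * (Real.sqrt 2 : ℂ)), -1;
     0, -1, Complex.I * (Real.sqrt 2 : ℂ);
     0, 0, 1]

def T : Matrix (Fin 3) (Fin 3) ℂ :=
  !![1, 0, Complex.I / (Real.sqrt 2 : ℂ); 0, 1, 0; 0, 0, 1]


lemma isq2_sq : isq2 * isq2 = -2 := by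
  have h : ((Real.sqrt 2 : ℝ) : ℂ) * ((Real.sqrt 2 : ℝ) : ℂ) = 2 := by
    rw [← Complex.ofReal_mul, Real.mul_self_sqrt (by norm_num)]; norm_num
  unfold isq2
  linear_combination (Complex.I * Complex.I) * h + 2 * Complex.I_mul_I

lemma isq2_ne : isq2 ≠ 0 := by
  intro h
  have := isq2_sq
  rw [h] at this
  norm_num at this

lemma isq2_conj : star isq2 = -isq2 := by
  simp [isq2]

lemma isq2_re : isq2.re = 0 := by simp [isq2]
lemma isq2_im : isq2.im = Real.sqrt 2 := by simp [isq2]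

lemma I_div : Complex.I / (Real.sqrt 2 : ℂ) = isq2 / 2 := by
  have h : ((Real.sqrt 2 : ℝ) : ℂ) * ((Real.sqrt 2 : ℝ) : ℂ) = 2 := by
    rw [← Complex.ofReal_mul, Real.mul_self_sqrt (by norm_num)]; norm_num
  have h0 : ((Real.sqrt 2 : ℝ) : ℂ) ≠ 0 := by
    intro h0; rw [h0] at h; norm_num at h
  unfold isq2
  field_simp
  linear_combination - h

lemma inO2.add {x y : ℂ} (hx : inO2 x) (hy : inO2 y) : inO2 (x + y) := by
  obtain ⟨a, b, rfl⟩ := hx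
  obtain ⟨c, d, rfl⟩ := hy
  exact ⟨a + c, b + d, by push_cast; ring⟩

lemma inO2.mul {x y : ℂ} (hx : inO2 x) (hy : inO2 y) : inO2 (x * y) := by
  obtain ⟨a, b, rfl⟩ := hx
  obtain ⟨c, d, rfl⟩ := hy
  exact ⟨a * c - 2 * (b * d), a * d + b * c, by
    push_cast; linear_combination (b * d : ℂ) * isq2_sq⟩

lemma inO2_isq2 : inO2 isq2 := ⟨0, 1, by simp⟩
lemma inO2_zero : inO2 0 := ⟨0, 0, by simp⟩
lemma inO2_one : inO2 1 := ⟨1, 0, by simp⟩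

lemma inU21.mul {A B : Matrix (Fin 3) (Fin 3) ℂ} (hA : inU21 A) (hB : inU21 B) :
    inU21 (A * B) := by
  refine ⟨hA.1.mul hB.1, ?_⟩
  rw [conjTranspose_mul]
  calc Bᴴ * Aᴴ * matJ * (A * B) = Bᴴ * (Aᴴ * matJ * A) * B := by simp only [Matrix.mul_assoc]
    _ = matJ := by rw [hA.2, hB.2]

lemma GammaS2.mul {A B : Matrix (Fin 3) (Fin 3) ℂ} (hA : GammaS2 A) (hB : GammaS2 B) :
    GammaS2 (A * B) := by
  obtain ⟨uA, a00, a01, a11, a12, a22, a02, a10, a20, a21⟩ := hA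
  obtain ⟨uB, b00, b01, b11, b12, b22, b02, b10, b20, b21⟩ := hB
  have hw := inO2_isq2
  have hne := isq2_ne
  refine ⟨uA.mul uB, ?_, ?_, ?_, ?_, ?_, ?_, ?_, ?_, ?_⟩
  all_goals rw [Matrix.mul_apply, Fin.sum_univ_three]
  · convert ((a00.mul b00).add ((a01.mul hw).mul b10)).add (a02.mul b20) using 1
    field_simp
  · convert ((a00.mul b01).add (a01.mul b11)).add (a02.mul b21) using 1
    field_simp
  · convert (((hw.mul a10).mul b01).add (a11.mul b11)).add ((hw.mul a12).mul b21) using 1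
    field_simp
  · convert ((a10.mul b02).add (a11.mul b12)).add (a12.mul b22) using 1
    field_simp
  · convert ((a20.mul b02).add ((hw.mul a21).mul b12)).add (a22.mul b22) using 1
    field_simp
  · convert ((a00.mul b02).add ((hw.mul a01).mul b12)).add (a02.mul b22) using 1
    ring
  · convert ((a10.mul b00).add (a11.mul b10)).add (a12.mul b20) using 1
    field_simp
  · convert ((a20.mul b00).add ((hw.mul a21).mul b10)).add (a22.mul b20) using 1
    field_simp
  · convert ((a20.mul b01).add (a21.mul b11)).add (a22.mul b21) using 1
    field_simp

/-- The Heisenberg translations. -/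
def heis (p q k : ℤ) : Matrix (Fin 3) (Fin 3) ℂ :=
  !![1, isq2 * (p - q * isq2), -(p ^ 2 + 2 * q ^ 2) + k * isq2 / 2;
     0, 1, isq2 * (p + q * isq2);
     0, 0, 1]

lemma heis_mul (p q k p' q' k' : ℤ) : heis p q k * heis p' q' k' =
    heis (p + p') (q + q') (k + k' - 4 * (p * q' - q * p')) := by
  unfold heis
  ext i j
  fin_cases i <;> fin_cases j <;> simp [Matrix.mul_apply, Fin.sum_univ_three]
  · ring
  · linear_combination ((p - q * isq2) * (p' + q' * isq2) + q * q' * 2 : ℂ) * isq2_sq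
  · ring

lemma heis_zero : heis 0 0 0 = 1 := by
  unfold heis
  ext i j
  fin_cases i <;> fin_cases j <;> simp

lemma heis_Gamma (p q k : ℤ) : GammaS2 (heis p q k) := by
  refine ⟨⟨?_, ?_⟩, ?_, ?_, ?_, ?_, ?_, ?_, ?_, ?_, ?_⟩
  · refine IsUnit.of_mul_eq_one (heis (-p) (-q) (-k)) ?_
    rw [heis_mul, ← heis_zero]; congr 1 <;> ring
  · have hc := isq2_conj
    simp only [RCLike.star_def] at hc
    have hc2 : (starRingEnd ℂ) 2 = 2 := map_ofNat _ 2
    unfold heis matJ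
    ext i j
    fin_cases i <;> fin_cases j <;>
      simp [Matrix.mul_apply, Fin.sum_univ_three, Matrix.conjTranspose_apply, hc, hc2]
    · ring
    · linear_combination (-(p ^ 2 : ℂ) + q ^ 2 * (isq2 * isq2 - 2)) * isq2_sq
  · exact inO2_one
  · exact ⟨2 * q, p, by simp [heis]; linear_combination - (q : ℂ) * isq2_sq⟩
  · exact inO2_one
  · exact ⟨-2 * q, p, by simp [heis]; linear_combination (q : ℂ) * isq2_sq⟩
  · exact inO2_one
  · exact ⟨-k, -(p ^ 2 + 2 * q ^ 2), by
      simp [heis]; linear_combination (k / 2 : ℂ) * isq2_sq⟩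
  · simp [heis, inO2_zero]
  · simp [heis, inO2_zero]
  · simp [heis, inO2_zero]

lemma I0_eq : I₀ = !![0, 0, isq2 / 2; 0, 1, 0; isq2, 0, 0] := by
  unfold I₀; rw [I_div]; rfl

lemma I0_sq : I₀ * !![0, 0, -isq2 / 2; 0, 1, 0; -isq2, 0, 0] = 1 := by
  rw [I0_eq]
  ext i j
  fin_cases i <;> fin_cases j <;> simp [Matrix.mul_apply, Fin.sum_univ_three]
  · linear_combination (-1/2 : ℂ) * isq2_sq
  · linear_combination (-1/2 : ℂ) * isq2_sq

lemma I0_Gamma : GammaS2 I₀ := by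
  refine ⟨⟨IsUnit.of_mul_eq_one _ I0_sq, ?_⟩, ?_⟩
  · have hc := isq2_conj
    simp only [RCLike.star_def] at hc
    have hc2 : (starRingEnd ℂ) 2 = 2 := map_ofNat _ 2
    rw [I0_eq]; unfold matJ
    ext i j
    fin_cases i <;> fin_cases j <;>
      simp [Matrix.mul_apply, Fin.sum_univ_three, Matrix.conjTranspose_apply, hc, hc2]
    · linear_combination (-1/2 : ℂ) * isq2_sq
    · linear_combination (-1/2 : ℂ) * isq2_sq
  · rw [I0_eq]
    simp [inO2_zero, inO2_one, isq2_ne]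
    exact ⟨-1, 0, by push_cast; linear_combination (1/2 : ℂ) * isq2_sq⟩

/-- The submonoid generated by the generators and inverses. -/
def genMon : Submonoid (Matrix (Fin 3) (Fin 3) ℂ) :=
  Submonoid.closure {I₀, R₁, R₂, R₃, T, I₀⁻¹, R₁⁻¹, R₂⁻¹, R₃⁻¹, T⁻¹}

lemma R1_mem : R₁ ∈ genMon := Submonoid.subset_closure (by simp)
lemma R2_mem : R₂ ∈ genMon := Submonoid.subset_closure (by simp)
lemma R3_mem : R₃ ∈ genMon := Submonoid.subset_closure (by simp)
lemma T_mem : T ∈ genMon := Submonoid.subset_closure (by simp)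
lemma Tinv_mem : T⁻¹ ∈ genMon := Submonoid.subset_closure (by simp)
lemma I0inv_mem : I₀⁻¹ ∈ genMon := Submonoid.subset_closure (by simp)

lemma T_eq : T = heis 0 0 1 := by
  unfold T heis; rw [I_div]; simp

lemma Tinv_eq : T⁻¹ = heis 0 0 (-1) := by
  rw [T_eq]
  apply Matrix.inv_eq_right_inv
  rw [heis_mul, ← heis_zero]; rfl

lemma heis_p_pos : heis 1 0 0 ∈ genMon := by
  have : heis 1 0 0 = R₃ * R₁ := by
    unfold heis R₃ R₁
    rw [← isq2]
    ext i j
    fin_cases i <;> fin_cases j <;> simp [Matrix.mul_apply, Fin.sum_univ_three]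
  rw [this]; exact mul_mem R3_mem R1_mem

lemma heis_p_neg : heis (-1) 0 0 ∈ genMon := by
  have : heis (-1) 0 0 = R₁ * R₃ := by
    unfold heis R₃ R₁
    rw [← isq2]
    ext i j
    fin_cases i <;> fin_cases j <;> simp [Matrix.mul_apply, Fin.sum_univ_three]
  rw [this]; exact mul_mem R1_mem R3_mem

lemma heis_q_neg : heis 0 (-1) 0 ∈ genMon := by
  have : heis 0 (-1) 0 = R₂ * R₁ := by
    unfold heis R₂ R₁
    ext i j
    fin_cases i <;> fin_cases j <;> simp [Matrix.mul_apply, Fin.sum_univ_three, isq2_sq]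
  rw [this]; exact mul_mem R2_mem R1_mem

lemma heis_q_pos : heis 0 1 0 ∈ genMon := by
  have : heis 0 1 0 = R₁ * R₂ := by
    unfold heis R₂ R₁
    ext i j
    fin_cases i <;> fin_cases j <;> simp [Matrix.mul_apply, Fin.sum_univ_three, isq2_sq]
  rw [this]; exact mul_mem R1_mem R2_mem

lemma heis_p (p : ℤ) : heis p 0 0 ∈ genMon := by
  induction p using Int.induction_on with
  | zero => rw [heis_zero]; exact one_mem _
  | succ n ih => simpa [heis_mul] using mul_mem ih heis_p_pos
  | pred n ih => simpa [heis_mul, sub_eq_add_neg] using mul_mem ih heis_p_neg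

lemma heis_q (p : ℤ) : heis 0 p 0 ∈ genMon := by
  induction p using Int.induction_on with
  | zero => rw [heis_zero]; exact one_mem _
  | succ n ih => simpa [heis_mul] using mul_mem ih heis_q_pos
  | pred n ih => simpa [heis_mul, sub_eq_add_neg] using mul_mem ih heis_q_neg

lemma heis_k (p : ℤ) : heis 0 0 p ∈ genMon := by
  induction p using Int.induction_on with
  | zero => rw [heis_zero]; exact one_mem _
  | succ n ih => simpa [heis_mul, T_eq] using mul_mem ih T_mem
  | pred n ih => simpa [heis_mul, Tinv_eq, sub_eq_add_neg] using mul_mem ih Tinv_mem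

lemma heis_mem (p q k : ℤ) : heis p q k ∈ genMon := by
  have := mul_mem (mul_mem (heis_p p) (heis_q q)) (heis_k (k + 4 * (p * q)))
  rw [heis_mul, heis_mul] at this
  convert this using 2 <;> ring

/-- Elements of the group that can be stripped off on the left. -/
def Good (g : Matrix (Fin 3) (Fin 3) ℂ) : Prop := GammaS2 g ∧ ∃ h ∈ genMon, h * g = 1

lemma Good.mul {g g' : Matrix (Fin 3) (Fin 3) ℂ} (h : Good g) (h' : Good g') : Good (g * g') := by
  obtain ⟨h1, x, hx, e⟩ := h
  obtain ⟨h2, y, hy, e'⟩ := h'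
  refine ⟨h1.mul h2, y * x, mul_mem hy hx, ?_⟩
  rw [Matrix.mul_assoc, ← Matrix.mul_assoc x, e, Matrix.one_mul, e']

lemma heis_Good (p q k : ℤ) : Good (heis p q k) :=
  ⟨heis_Gamma p q k, heis (-p) (-q) (-k), heis_mem _ _ _, by
    rw [heis_mul, ← heis_zero]; congr 1 <;> ring⟩

lemma I0_Good : Good I₀ :=
  ⟨I0_Gamma, I₀⁻¹, I0inv_mem, Matrix.nonsing_inv_mul _
    ((Matrix.isUnit_iff_isUnit_det _).1 (IsUnit.of_mul_eq_one _ I0_sq))⟩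

/-- Being a sign times a word. -/
def PM (M : Matrix (Fin 3) (Fin 3) ℂ) : Prop :=
  ∃ ε : ℂ, (ε = 1 ∨ ε = -1) ∧ ∃ W ∈ genMon, M = ε • W

lemma PM_of_Good {g M : Matrix (Fin 3) (Fin 3) ℂ} (hg : Good g) (h : PM (g * M)) : PM M := by
  obtain ⟨_, x, hx, e⟩ := hg
  obtain ⟨ε, hε, W, hW, e'⟩ := h
  refine ⟨ε, hε, x * W, mul_mem hx hW, ?_⟩
  rw [← Matrix.mul_smul, ← e', ← Matrix.mul_assoc, e, Matrix.one_mul]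

/-! ### Base case -/

lemma unit_of_normSq {z : ℂ} (hz : inO2 z) (h : Complex.normSq z = 1) : z = 1 ∨ z = -1 := by
  obtain ⟨a, b, rfl⟩ := hz
  have h2 : Real.sqrt 2 * Real.sqrt 2 = 2 := Real.mul_self_sqrt (by norm_num)
  have h1 : (a : ℝ) ^ 2 + 2 * (b : ℝ) ^ 2 = 1 := by
    rw [Complex.normSq_apply] at h
    simp [isq2_re, isq2_im] at h
    linear_combination h - (b : ℝ) ^ 2 * h2
  have h3 : a ^ 2 + 2 * b ^ 2 = 1 := by exact_mod_cast h1
  have hb : b = 0 := by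
    by_contra hb
    have : 0 < b ^ 2 := by positivity
    nlinarith [sq_nonneg a]
  subst hb
  have : a = 1 ∨ a = -1 := by
    exact (sq_eq_sq_iff_eq_or_eq_neg.1 (by simpa using h3))
  rcases this with rfl | rfl <;> simp

lemma normSq_int {z : ℂ} (hz : inO2 z) : ∃ n : ℕ, Complex.normSq z = n := by
  obtain ⟨a, b, rfl⟩ := hz
  have h2 : Real.sqrt 2 * Real.sqrt 2 = 2 := Real.mul_self_sqrt (by norm_num)
  refine ⟨(a ^ 2 + 2 * b ^ 2).toNat, ?_⟩
  have : (((a ^ 2 + 2 * b ^ 2).toNat : ℤ) : ℝ) = ((a ^ 2 + 2 * b ^ 2 : ℤ) : ℝ) := by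
    rw [Int.toNat_of_nonneg (by positivity)]
  rw [Int.cast_natCast] at this
  rw [this, Complex.normSq_apply]
  simp [isq2_re, isq2_im]
  linear_combination (b : ℝ) ^ 2 * h2

lemma J_eqs {M : Matrix (Fin 3) (Fin 3) ℂ} (h : inU21 M) (i j : Fin 3) :
    star (M 0 i) * M 2 j + star (M 1 i) * M 1 j + star (M 2 i) * M 0 j = matJ i j := by
  have := congrFun (congrFun h.2 i) j
  rw [← this]
  simp [matJ, Matrix.mul_apply, Fin.sum_univ_three]
  ring

lemma star_mul_self_eq (z : ℂ) : star z * z = (Complex.normSq z : ℂ) := by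
  rw [Complex.normSq_eq_conj_mul_self]; rfl

lemma heis_case {M : Matrix (Fin 3) (Fin 3) ℂ} (hM : GammaS2 M) (h00 : M 0 0 = 1)
    (h11 : M 1 1 = 1) (h22 : M 2 2 = 1) (h10 : M 1 0 = 0) (h20 : M 2 0 = 0) (h21 : M 2 1 = 0) :
    M ∈ genMon := by
  obtain ⟨u, -, -, -, ⟨m, n, hmn⟩, -, ⟨r, s, hrs⟩, -, -, -⟩ := hM
  have e12 := J_eqs u 1 2
  have e22 := J_eqs u 2 2
  have e21 := J_eqs u 2 1
  have hc := isq2_conj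
  simp only [RCLike.star_def] at hc
  simp [matJ, h00, h11, h22, h21, h10, h20] at e12 e22 e21
  have h2 : Real.sqrt 2 * Real.sqrt 2 = 2 := Real.mul_self_sqrt (by norm_num)
  have h02 : M 0 2 = s - r * isq2 / 2 := by
    apply mul_left_cancel₀ isq2_ne
    rw [hrs]; linear_combination (r / 2 : ℂ) * isq2_sq
  rw [h02, hmn] at e22
  have e : ((2 * s + m ^ 2 + 2 * n ^ 2 : ℤ) : ℂ) = 0 := by
    have hc2 : (starRingEnd ℂ) 2 = 2 := map_ofNat _ 2
    simp [hc, hc2] at e22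
    push_cast
    linear_combination e22 + (n : ℂ) ^ 2 * isq2_sq
  have e' : 2 * s + m ^ 2 + 2 * n ^ 2 = 0 := by exact_mod_cast e
  have hm : Even m := by
    have : Even (m ^ 2) := ⟨-s - n ^ 2, by linarith⟩
    exact (Int.even_pow.1 this).1
  obtain ⟨q, hq⟩ := hm
  have hs : s = -(n ^ 2 + 2 * q ^ 2) := by subst hq; nlinarith
  have : M = heis n (-q) (-r) := by
    unfold heis
    ext i j
    fin_cases i <;> fin_cases j <;> simp [h00, h11, h22, h10, h20, h21]
    · have := e21
      rw [hmn] at this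
      simp [hc] at this
      subst hq
      push_cast at this
      linear_combination this - (q : ℂ) * isq2_sq
    · rw [h02, hs]; push_cast; ring
    · rw [hmn, hq]; push_cast; linear_combination (q : ℂ) * isq2_sq
  rw [this]; exact heis_mem _ _ _

lemma R1_sq : R₁ * R₁ = 1 := by
  unfold R₁
  ext i j
  fin_cases i <;> fin_cases j <;> simp [Matrix.mul_apply, Fin.sum_univ_three]

lemma R1_Gamma : GammaS2 R₁ := by
  have hneg : inO2 (-1) := ⟨-1, 0, by simp⟩
  refine ⟨⟨IsUnit.of_mul_eq_one _ R1_sq, ?_⟩, ?_⟩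
  · unfold matJ R₁
    ext i j
    fin_cases i <;> fin_cases j <;>
      simp [Matrix.mul_apply, Fin.sum_univ_three, Matrix.conjTranspose_apply]
  · simp [R₁, inO2_one, inO2_zero, hneg]

lemma neg_Gamma {M : Matrix (Fin 3) (Fin 3) ℂ} (h : GammaS2 M) : GammaS2 (-M) := by
  have hneg : inO2 (-1) := ⟨-1, 0, by simp⟩
  have hn : ∀ {x : ℂ}, inO2 x → inO2 (-x) := fun hx => by simpa using hneg.mul hx
  obtain ⟨u, a00, a01, a11, a12, a22, a02, a10, a20, a21⟩ := h
  refine ⟨⟨u.1.neg, by simpa using u.2⟩, ?_⟩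
  simp only [Matrix.neg_apply, neg_div, mul_neg]
  exact ⟨hn a00, hn a01, hn a11, hn a12, hn a22, hn a02, hn a10, hn a20, hn a21⟩

lemma base_case1 {M : Matrix (Fin 3) (Fin 3) ℂ} (hM : GammaS2 M) (h00 : M 0 0 = 1)
    (h11 : M 1 1 = 1 ∨ M 1 1 = -1) (h22 : M 2 2 = 1) (h10 : M 1 0 = 0) (h20 : M 2 0 = 0)
    (h21 : M 2 1 = 0) : M ∈ genMon := by
  rcases h11 with h11 | h11
  · exact heis_case hM h00 h11 h22 h10 h20 h21
  · have : M * R₁ ∈ genMon := by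
      apply heis_case (hM.mul R1_Gamma) <;>
        simp [R₁, Matrix.mul_apply, Fin.sum_univ_three, h00, h11, h22, h10, h20, h21]
    have h := mul_mem this R1_mem
    rwa [Matrix.mul_assoc, R1_sq, Matrix.mul_one] at h

lemma base_case {M : Matrix (Fin 3) (Fin 3) ℂ} (hM : GammaS2 M) (h20 : M 2 0 = 0) : PM M := by
  have u := hM.1
  have h10 : M 1 0 = 0 := by
    have := J_eqs u 0 0
    simpa [h20, matJ] using this
  have e02 : star (M 0 0) * M 2 2 = 1 := by
    simpa [h20, h10, matJ] using J_eqs u 0 2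
  have h00' : M 0 0 ≠ 0 := by
    intro h; simp [h] at e02
  have h21 : M 2 1 = 0 := by
    have := J_eqs u 0 1
    simpa [h20, h10, matJ, h00'] using this
  have h11 : M 1 1 = 1 ∨ M 1 1 = -1 := by
    apply unit_of_normSq hM.2.2.2.1
    have := J_eqs u 1 1
    rw [star_mul_self_eq] at this
    simp [h21, matJ] at this
    exact_mod_cast this
  have hn : Complex.normSq (M 0 0) * Complex.normSq (M 2 2) = 1 := by
    have := congrArg Complex.normSq e02
    simpa using this
  obtain ⟨a, ha⟩ := normSq_int hM.2.1
  obtain ⟨b, hb⟩ := normSq_int hM.2.2.2.2.2.1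
  have ha1 : a = 1 := by
    rw [ha, hb] at hn
    have hn' : a * b = 1 := by exact_mod_cast hn
    exact Nat.eq_one_of_mul_eq_one_right hn'
  have h00 := unit_of_normSq hM.2.1 (by rw [ha, ha1]; simp)
  rcases h00 with h00 | h00
  · refine ⟨1, Or.inl rfl, M, ?_, by simp⟩
    exact base_case1 hM h00 h11 (by simpa [h00] using e02) h10 h20 h21
  · refine ⟨-1, Or.inr rfl, -M, ?_, by simp⟩
    have h22 : M 2 2 = -1 := by
      simp [h00] at e02
      linear_combination -e02
    apply base_case1 (neg_Gamma hM) <;> simp [h00, h22, h10, h20, h21]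
    rcases h11 with h | h <;> simp [h]

/-! ### Descent -/

lemma corner_ineq (X Y A : ℝ) (hX : X ≤ 1) (hX0 : 1 / 3 ≤ X) (hY : Y ≤ 1 / 2) (hY0 : 1 / 6 ≤ Y)
    (hA : |A - (1 - 2 * X + 4 * Y) / 3| ≤ 1 / 2) :
    (1 - 2 * X + (X ^ 2 + 2 * Y ^ 2) - A) ^ 2
      + 2 * (-2 * Y + (X ^ 2 + 2 * Y ^ 2) / 2 + A) ^ 2 < 1 := by
  have key : (1 - 2 * X + (X ^ 2 + 2 * Y ^ 2) - A) ^ 2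
      + 2 * (-2 * Y + (X ^ 2 + 2 * Y ^ 2) / 2 + A) ^ 2
      = 3 * (A - (1 - 2 * X + 4 * Y) / 3) ^ 2
        + 3 / 2 * ((X - 2 / 3) ^ 2 + 2 * (Y - 1 / 3) ^ 2) ^ 2 := by ring
  have h1 : (A - (1 - 2 * X + 4 * Y) / 3) ^ 2 ≤ 1 / 4 := by
    have := sq_le_sq' (abs_le.1 hA).1 (abs_le.1 hA).2
    linarith
  have h2 : (X - 2 / 3) ^ 2 + 2 * (Y - 1 / 3) ^ 2 ≤ 1 / 6 := by nlinarith
  have h3 : ((X - 2 / 3) ^ 2 + 2 * (Y - 1 / 3) ^ 2) ^ 2 ≤ (1 / 6) ^ 2 :=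
    pow_le_pow_left₀ (by positivity) h2 2
  rw [key]; linarith

lemma box_bounds (X Y : ℝ) (hX : |X| ≤ 1) (hY : |Y| ≤ 1 / 2)
    (h : 3 / 2 ≤ (X ^ 2 + 2 * Y ^ 2) ^ 2) : 1 / 3 ≤ |X| ∧ 1 / 6 ≤ |Y| := by
  have hx := sq_abs X
  have hy := sq_abs Y
  rw [← hx, ← hy] at h
  have h0 := abs_nonneg X
  have h1 := abs_nonneg Y
  have hx2 : |X| ^ 2 ≤ 1 := by nlinarith
  have hy2 : |Y| ^ 2 ≤ 1 / 4 := by nlinarith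
  have hn : 6 / 5 ≤ |X| ^ 2 + 2 * |Y| ^ 2 := by
    by_contra hh
    push Not at hh
    nlinarith [sq_nonneg X, sq_nonneg Y]
  constructor
  · nlinarith
  · nlinarith

/-- The real-variable descent statement: `s, k` are signs. -/
lemma real_descent (X Y A : ℝ) (hX : |X| ≤ 1) (hY : |Y| ≤ 1 / 2) :
    (∃ j : ℤ, (A - j) ^ 2 + (X ^ 2 + 2 * Y ^ 2) ^ 2 / 2 < 1) ∨
    (∃ s k j : ℤ, s ^ 2 = 1 ∧ k ^ 2 = 1 ∧
      (1 + 2 * s * X + (X ^ 2 + 2 * Y ^ 2) + k * (A - j)) ^ 2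
      + 2 * (2 * s * Y - k * (X ^ 2 + 2 * Y ^ 2) / 2 + (A - j)) ^ 2 < 1) := by
  by_cases h : 3 / 2 ≤ (X ^ 2 + 2 * Y ^ 2) ^ 2
  · right
    obtain ⟨h1, h2⟩ := box_bounds X Y hX hY h
    -- signs
    have hsx : ∃ s : ℤ, s ^ 2 = 1 ∧ |X| = -s * X := by
      rcases abs_cases X with h | h
      · exact ⟨-1, by norm_num, by rw [h.1]; push_cast; ring⟩
      · exact ⟨1, by norm_num, by rw [h.1]; push_cast; ring⟩
    have hsy : ∃ s : ℤ, s ^ 2 = 1 ∧ |Y| = s * Y := by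
      rcases abs_cases Y with h | h
      · exact ⟨1, by norm_num, by rw [h.1]; push_cast; ring⟩
      · exact ⟨-1, by norm_num, by rw [h.1]; push_cast; ring⟩
    obtain ⟨s, hs, hsX⟩ := hsx
    obtain ⟨e, he, heY⟩ := hsy
    have hsR : (s : ℝ) ^ 2 = 1 := by exact_mod_cast hs
    have heR : (e : ℝ) ^ 2 = 1 := by exact_mod_cast he
    set k := s * e with hk
    have hkk : k ^ 2 = 1 := by rw [hk, mul_pow, hs, he]; rfl
    have hkR : (k : ℝ) ^ 2 = 1 := by exact_mod_cast hkk
    set B : ℝ := -k * A - (1 - 2 * |X| + 4 * |Y|) / 3 with hB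
    have hr := abs_sub_round B
    have hc := corner_ineq |X| |Y| (-k * A - round B) hX h1 hY h2 (by
      refine le_of_eq_of_le (congrArg abs ?_) hr
      rw [hB]; ring)
    refine ⟨s, k, -k * round B, hs, hkk, ?_⟩
    refine lt_of_eq_of_lt ?_ hc
    rw [sq_abs X, sq_abs Y, hsX, heY]
    have hkc : (k : ℝ) = s * e := by rw [hk]; push_cast; ring
    set n := X ^ 2 + 2 * Y ^ 2
    set R : ℝ := ((round B : ℤ) : ℝ)
    have t1 : 1 + 2 * (s : ℝ) * X + n + k * (A - ((-k * round B : ℤ) : ℝ))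
        = 1 - 2 * (-s * X) + n - (-k * A - R) := by
      push_cast; linear_combination R * hkR
    have t2 : 2 * (s : ℝ) * Y - k * n / 2 + (A - ((-k * round B : ℤ) : ℝ))
        = -k * (-2 * (e * Y) + n / 2 + (-k * A - R)) := by
      push_cast
      have : (s : ℝ) = k * e := by rw [hkc]; linear_combination -(s : ℝ) * heR
      rw [this]
      linear_combination (-A) * hkR
    rw [t1, t2, mul_pow, neg_sq, hkR, one_mul]
  · left
    push Not at h
    have hr := abs_sub_round A
    refine ⟨round A, ?_⟩
    have := sq_le_sq' (abs_le.1 hr).1 (abs_le.1 hr).2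
    linarith

lemma descent_box {M : Matrix (Fin 3) (Fin 3) ℂ} (hM : GammaS2 M) (h20 : M 2 0 ≠ 0)
    (hX : |(M 1 0 / M 2 0).re| ≤ 1) (hY : |(M 1 0 / M 2 0).im / Real.sqrt 2| ≤ 1 / 2) :
    ∃ g, Good g ∧ Complex.normSq ((g * M) 2 0) < Complex.normSq (M 2 0) := by
  have h2 : Real.sqrt 2 * Real.sqrt 2 = 2 := Real.mul_self_sqrt (by norm_num)
  have hs0 : Real.sqrt 2 ≠ 0 := by positivity
  set ζ := M 1 0 / M 2 0 with hζ
  set α := M 0 0 / M 2 0 with hα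
  have e10 : M 1 0 = ζ * M 2 0 := by rw [hζ]; field_simp
  have e00 : M 0 0 = α * M 2 0 := by rw [hα]; field_simp
  set X := ζ.re with hXd
  set Y := ζ.im / Real.sqrt 2 with hYd
  have him : ζ.im = Y * Real.sqrt 2 := by rw [hYd]; field_simp
  have hpos : 0 < Complex.normSq (M 2 0) := Complex.normSq_pos.2 h20
  have hre : α.re = -(X ^ 2 + 2 * Y ^ 2) / 2 := by
    have := J_eqs hM.1 0 0
    rw [e10, e00] at this
    have h3 : (star (M 2 0) * M 2 0) * (star α + star ζ * ζ + α) = 0 := by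
      simp [matJ] at this
      simp only [RCLike.star_def]
      linear_combination this
    have h4 : star α + star ζ * ζ + α = 0 := by
      rcases mul_eq_zero.1 h3 with h | h
      · simp [h20] at h
      · exact h
    have h5 := congrArg Complex.re h4
    simp at h5
    rw [him, ← hXd] at h5
    linear_combination (1 / 2) * h5 - Y ^ 2 / 2 * h2
  set A := -(Real.sqrt 2 * α.im) with hA
  have haim : α.im = -A * Real.sqrt 2 / 2 := by
    rw [hA]; linear_combination (-α.im / 2) * h2
  rcases real_descent X Y A hX hY with ⟨j, hj⟩ | ⟨s, k, j, hs, hk, hj⟩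
  · refine ⟨I₀ * heis 0 0 j, I0_Good.mul (heis_Good _ _ _), ?_⟩
    have : (I₀ * heis 0 0 j * M) 2 0 = (isq2 * (α + j * isq2 / 2)) * M 2 0 := by
      rw [I0_eq]
      simp [heis, Matrix.mul_apply, Fin.sum_univ_three, e00]
      ring
    rw [this, Complex.normSq_mul]
    have hlt : Complex.normSq (isq2 * (α + j * isq2 / 2)) < 1 := by
      refine lt_of_eq_of_lt ?_ hj
      rw [Complex.normSq_mul, Complex.normSq_apply, Complex.normSq_apply]
      simp [isq2_re, isq2_im, haim, hre]
      linear_combination ((A - j) ^ 2 / 2) * h2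
    nlinarith
  · have hsR : (s : ℂ) ^ 2 = 1 := by exact_mod_cast hs
    have hsR' : (s : ℝ) ^ 2 = 1 := by exact_mod_cast hs
    have hkR : (k : ℝ) ^ 2 = 1 := by exact_mod_cast hk
    refine ⟨I₀ * heis s 0 k * (I₀ * heis 0 0 j), (I0_Good.mul (heis_Good _ _ _)).mul
      (I0_Good.mul (heis_Good _ _ _)), ?_⟩
    have : (I₀ * heis s 0 k * (I₀ * heis 0 0 j) * M) 2 0
        = (-1 - 2 * s * ζ + (2 - k * isq2) * (α + j * isq2 / 2)) * M 2 0 := by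
      have h0 : (I₀ * heis 0 0 j * M) 0 0 = isq2 / 2 * M 2 0 := by
        rw [I0_eq]
        simp [heis, Matrix.mul_apply, Fin.sum_univ_three]
      have h1 : (I₀ * heis 0 0 j * M) 1 0 = ζ * M 2 0 := by
        rw [I0_eq]
        simp [heis, Matrix.mul_apply, Fin.sum_univ_three, e10]
      have h2 : (I₀ * heis 0 0 j * M) 2 0 = (isq2 * (α + j * isq2 / 2)) * M 2 0 := by
        rw [I0_eq]
        simp [heis, Matrix.mul_apply, Fin.sum_univ_three, e00]
        ring
      have h3 : ∀ N : Matrix (Fin 3) (Fin 3) ℂ, (I₀ * heis s 0 k * N) 2 0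
          = isq2 * (N 0 0 + isq2 * s * N 1 0 + (-1 + k * isq2 / 2) * N 2 0) := by
        intro N
        rw [I0_eq]
        simp [heis, Matrix.mul_apply, Fin.sum_univ_three, hsR]
        ring
      rw [Matrix.mul_assoc, h3, h0, h1, h2]
      linear_combination (1 / 2 + s * ζ + (-1 + k * isq2 / 2) * (α + j * isq2 / 2)) *
        M 2 0 * isq2_sq
    rw [this, Complex.normSq_mul]
    have hlt : Complex.normSq (-1 - 2 * s * ζ + (2 - k * isq2) * (α + j * isq2 / 2)) < 1 := by
      refine lt_of_eq_of_lt ?_ hj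
      set v : ℂ := -1 - 2 * s * ζ + (2 - k * isq2) * (α + j * isq2 / 2) with hv
      have hvre : v.re = -(1 + 2 * s * X + (X ^ 2 + 2 * Y ^ 2) + k * (A - j)) := by
        rw [hv]
        simp [isq2_re, isq2_im, haim, hre, ← hXd]
        linear_combination (-(k : ℝ) * (A - j) / 2) * h2
      have hvim : v.im =
          -Real.sqrt 2 * (2 * s * Y - k * (X ^ 2 + 2 * Y ^ 2) / 2 + (A - j)) := by
        rw [hv]
        simp [isq2_re, isq2_im, haim, hre, him]
        ring
      rw [Complex.normSq_apply, hvre, hvim]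
      linear_combination (2 * s * Y - k * (X ^ 2 + 2 * Y ^ 2) / 2 + (A - j)) ^ 2 * h2
    nlinarith

lemma descent {M : Matrix (Fin 3) (Fin 3) ℂ} (hM : GammaS2 M) (h20 : M 2 0 ≠ 0) :
    ∃ g, Good g ∧ Complex.normSq ((g * M) 2 0) < Complex.normSq (M 2 0) := by
  have hs0 : Real.sqrt 2 ≠ 0 := by positivity
  have h2 : Real.sqrt 2 * Real.sqrt 2 = 2 := Real.mul_self_sqrt (by norm_num)
  set ζ := M 1 0 / M 2 0 with hζ
  have e10 : M 1 0 = ζ * M 2 0 := by rw [hζ]; field_simp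
  set q := round (ζ.re / 2)
  set p := -round (ζ.im / Real.sqrt 2) with hp
  have f20 : (heis p q 0 * M) 2 0 = M 2 0 := by
    simp [heis, Matrix.mul_apply, Fin.sum_univ_three]
  have f10 : (heis p q 0 * M) 1 0 / M 2 0 = ζ + isq2 * (p + q * isq2) := by
    simp [heis, Matrix.mul_apply, Fin.sum_univ_three, e10]
    field_simp
  have hq := abs_sub_round (ζ.re / 2)
  have hp' := abs_sub_round (ζ.im / Real.sqrt 2)
  obtain ⟨g, hg, hlt⟩ := descent_box (M := heis p q 0 * M) ((heis_Gamma p q 0).mul hM)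
    (by rwa [f20]) (by
      rw [f20, f10]
      simp [isq2_re, isq2_im]
      have e : ζ.re + -(Real.sqrt 2 * (q * Real.sqrt 2)) = 2 * (ζ.re / 2 - q) := by
        linear_combination (-(q : ℝ)) * h2
      rw [e, abs_mul, abs_two]
      linarith) (by
      rw [f20, f10]
      simp [isq2_re, isq2_im]
      refine le_of_eq_of_le (congrArg abs ?_) (hp'.trans_eq (by norm_num))
      rw [hp]
      field_simp
      push_cast
      ring)
  refine ⟨g * heis p q 0, hg.mul (heis_Good _ _ _), ?_⟩
  rw [Matrix.mul_assoc]
  rwa [f20] at hlt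

lemma main_induction (n : ℕ) : ∀ M : Matrix (Fin 3) (Fin 3) ℂ, GammaS2 M →
    Complex.normSq (M 2 0) < n → PM M := by
  induction n with
  | zero => intro M _ h; exact absurd h (not_lt.2 (by simpa using Complex.normSq_nonneg _))
  | succ n ih =>
    intro M hM h
    by_cases h20 : M 2 0 = 0
    · exact base_case hM h20
    obtain ⟨g, hg, hlt⟩ := descent hM h20
    refine PM_of_Good hg (ih _ (hg.1.mul hM) ?_)
    have hO : ∀ {N : Matrix (Fin 3) (Fin 3) ℂ}, GammaS2 N → inO2 (N 2 0) := fun {N} hN => by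
      have := inO2_isq2.mul hN.2.2.2.2.2.2.2.2.1
      rwa [mul_div_cancel₀ _ isq2_ne] at this
    obtain ⟨a, ha⟩ := normSq_int (hO hM)
    obtain ⟨b, hb⟩ := normSq_int (hO (hg.1.mul hM))
    rw [hb]
    rw [ha] at h hlt
    rw [hb] at hlt
    norm_cast at *
    omega

/-- `Γ_s^(2)` is generated, modulo `±I`, by `I₀, R₁, R₂, R₃, T`. -/
theorem gammaS2_generated (M : Matrix (Fin 3) (Fin 3) ℂ) (hM : GammaS2 M) :
    ∃ (ε : ℂ) (L : List (Matrix (Fin 3) (Fin 3) ℂ)),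
      (ε = 1 ∨ ε = -1) ∧
      (∀ A ∈ L, A ∈ ({I₀, R₁, R₂, R₃, T, I₀⁻¹, R₁⁻¹, R₂⁻¹, R₃⁻¹, T⁻¹} :
        Set (Matrix (Fin 3) (Fin 3) ℂ))) ∧
      M = ε • L.prod := by
  obtain ⟨n, hn⟩ := exists_nat_gt (Complex.normSq (M 2 0))
  obtain ⟨ε, hε, W, hW, rfl⟩ := main_induction n M hM hn
  obtain ⟨L, hL, rfl⟩ := Submonoid.exists_list_of_mem_closure hW
  exact ⟨ε, L, hε, hL, rfl⟩
end
end

section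
/- For each d ∈ {7,11}, the set Γ_s^(d) is a subgroup of U(2,1;J): it contains the identity matrix, and it is closed under matrix multiplication and under matrix inversion. -/
noncomputable section

open Matrix

/-- `i√d`. -/
def isqd (d : ℕ) : ℂ := Complex.I * (Real.sqrt d : ℂ)

/-- `ω_d = (1 + i√d)/2`. -/
def ωd (d : ℕ) : ℂ := (1 + Complex.I * (Real.sqrt d : ℂ)) / 2

/-- Membership in the ring of integers `O_d = ℤ + ℤ·ω_d` (for `d ≡ 3 mod 4`). -/
def inOd (d : ℕ) (z : ℂ) : Prop := ∃ a b : ℤ, z = (a : ℂ) + (b : ℂ) * ωd d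

/-- The sister group `Γ_s^(d)`. -/
def GammaSd (d : ℕ) (M : Matrix (Fin 3) (Fin 3) ℂ) : Prop :=
  inU21 M ∧ inOd d (M 0 0) ∧ inOd d (M 0 1) ∧ inOd d (M 1 1) ∧ inOd d (M 1 2) ∧
    inOd d (M 2 2) ∧ inOd d (isqd d * M 0 2) ∧ inOd d (M 1 0 / isqd d) ∧
    inOd d (M 2 0 / isqd d) ∧ inOd d (M 2 1 / isqd d)

theorem isqd_ne_zero {d : ℕ} (hd : 0 < d) : isqd d ≠ 0 := by
  unfold isqd
  have : Real.sqrt d ≠ 0 := (Real.sqrt_pos.mpr (by exact_mod_cast hd)).ne'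
  exact mul_ne_zero Complex.I_ne_zero (by exact_mod_cast this)

theorem isqd_sq (d : ℕ) : isqd d * isqd d = -(d : ℂ) := by
  unfold isqd
  have : (Real.sqrt d : ℂ) * (Real.sqrt d : ℂ) = d := by
    rw [← Complex.ofReal_mul, Real.mul_self_sqrt (Nat.cast_nonneg d)]
    simp
  linear_combination (Complex.I * Complex.I) * this + (d : ℂ) * Complex.I_mul_I

theorem omega_eq (d : ℕ) : ωd d = (1 + isqd d) / 2 := rfl

theorem star_isqd (d : ℕ) : star (isqd d) = -isqd d := by
  simp [isqd]

theorem star_omega (d : ℕ) : star (ωd d) = 1 - ωd d := by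
  have h := star_isqd d
  have h2 : star (ωd d) = (1 + star (isqd d)) / 2 := by
    simp [omega_eq]
  rw [h2, h, omega_eq]; ring

/-- The ring of integers as a subring of the complex numbers, when `d = 4 m - 1`. -/
def ringOd (d : ℕ) (m : ℤ) (hm : (d : ℤ) = 4 * m - 1) : Subring ℂ where
  carrier := {z | inOd d z}
  zero_mem' := ⟨0, 0, by simp⟩
  one_mem' := ⟨1, 0, by simp⟩
  add_mem' := by
    rintro _ _ ⟨a, b, rfl⟩ ⟨p, q, rfl⟩
    exact ⟨a + p, b + q, by push_cast; ring⟩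
  neg_mem' := by
    rintro _ ⟨a, b, rfl⟩
    exact ⟨-a, -b, by push_cast; ring⟩
  mul_mem' := by
    rintro _ _ ⟨a, b, rfl⟩ ⟨p, q, rfl⟩
    refine ⟨a * p - m * (b * q), a * q + b * p + b * q, ?_⟩
    have hc : (d : ℂ) = 4 * m - 1 := by exact_mod_cast congrArg (Int.cast : ℤ → ℂ) hm
    have h := isqd_sq d
    rw [hc] at h
    rw [omega_eq]
    push_cast
    linear_combination ((b : ℂ) * q / 4) * h

theorem inOd_star {d : ℕ} {z : ℂ} (h : inOd d z) : inOd d (star z) := by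
  obtain ⟨a, b, rfl⟩ := h
  refine ⟨a + b, -b, ?_⟩
  rw [star_add, star_mul', star_omega]
  simp
  ring

theorem inOd_isqd (d : ℕ) : inOd d (isqd d) :=
  ⟨-1, 2, by rw [omega_eq]; push_cast; ring⟩

theorem matJ_sq : matJ * matJ = 1 := by
  ext i j
  fin_cases i <;> fin_cases j <;> simp [matJ, Matrix.mul_apply, Fin.sum_univ_three]

theorem inU21_left_inv {M : Matrix (Fin 3) (Fin 3) ℂ} (h : inU21 M) :
    M⁻¹ = matJ * Mᴴ * matJ := by
  apply Matrix.inv_eq_left_inv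
  rw [Matrix.mul_assoc, Matrix.mul_assoc, ← Matrix.mul_assoc Mᴴ, h.2, matJ_sq]

theorem inU21_mul {M N : Matrix (Fin 3) (Fin 3) ℂ} (hM : inU21 M) (hN : inU21 N) :
    inU21 (M * N) := by
  refine ⟨hM.1.mul hN.1, ?_⟩
  calc (M * N)ᴴ * matJ * (M * N) = Nᴴ * (Mᴴ * matJ * M) * N := by
        rw [Matrix.conjTranspose_mul]; simp only [Matrix.mul_assoc]
    _ = matJ := by rw [hM.2, hN.2]

theorem inU21_inv {M : Matrix (Fin 3) (Fin 3) ℂ} (hM : inU21 M) : inU21 M⁻¹ := by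
  have hdet := (Matrix.isUnit_iff_isUnit_det M).mp hM.1
  have h1 : M * M⁻¹ = 1 := Matrix.mul_nonsing_inv M hdet
  have h2 : (M⁻¹)ᴴ * Mᴴ = 1 := by
    rw [← Matrix.conjTranspose_mul, h1, Matrix.conjTranspose_one]
  refine ⟨Matrix.isUnit_nonsing_inv_iff.mpr hM.1, ?_⟩
  calc (M⁻¹)ᴴ * matJ * M⁻¹ = (M⁻¹)ᴴ * (Mᴴ * matJ * M) * M⁻¹ := by rw [hM.2]
    _ = ((M⁻¹)ᴴ * Mᴴ) * matJ * (M * M⁻¹) := by simp only [Matrix.mul_assoc]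
    _ = matJ := by rw [h1, h2, Matrix.one_mul, Matrix.mul_one]

theorem inv_apply_star {M : Matrix (Fin 3) (Fin 3) ℂ} (h : inU21 M) (i j : Fin 3) :
    M⁻¹ i j = star (M (Fin.rev j) (Fin.rev i)) := by
  rw [inU21_left_inv h]
  fin_cases i <;> fin_cases j <;>
    simp [matJ, Matrix.mul_apply, Matrix.vecMul, dotProduct, Fin.sum_univ_three, Fin.rev]

theorem gammaSd_inv {d : ℕ} (m : ℤ) (hm : (d : ℤ) = 4 * m - 1)
    {M : Matrix (Fin 3) (Fin 3) ℂ} (h : GammaSd d M) : GammaSd d M⁻¹ := by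
  obtain ⟨hU, h00, h01, h11, h12, h22, h02, h10, h20, h21⟩ := h
  have hneg : ∀ z, inOd d z → inOd d (-z) := fun z hz => (ringOd d m hm).neg_mem hz
  have hdiv : ∀ z, inOd d (z / isqd d) → inOd d (star z / isqd d) := by
    intro z hz
    have := hneg _ (inOd_star hz)
    rwa [star_div₀, star_isqd, div_neg, neg_neg] at this
  have hmul : ∀ z, inOd d (isqd d * z) → inOd d (isqd d * star z) := by
    intro z hz
    have := hneg _ (inOd_star hz)
    rwa [star_mul', star_isqd, neg_mul, neg_neg] at this
  refine ⟨inU21_inv hU, ?_, ?_, ?_, ?_, ?_, ?_, ?_, ?_, ?_⟩ <;> rw [inv_apply_star hU]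
  · exact inOd_star h22
  · exact inOd_star h12
  · exact inOd_star h11
  · exact inOd_star h01
  · exact inOd_star h00
  · exact hmul _ h02
  · exact hdiv _ h21
  · exact hdiv _ h20
  · exact hdiv _ h10

theorem gammaSd_mul {d : ℕ} (m : ℤ) (hm : (d : ℤ) = 4 * m - 1) (hd : 0 < d)
    {M N : Matrix (Fin 3) (Fin 3) ℂ} (hM : GammaSd d M) (hN : GammaSd d N) :
    GammaSd d (M * N) := by
  obtain ⟨hU, a00, a01, a11, a12, a22, a02, a10, a20, a21⟩ := hM
  obtain ⟨hV, b00, b01, b11, b12, b22, b02, b10, b20, b21⟩ := hN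
  have hs : isqd d ≠ 0 := isqd_ne_zero hd
  have s := inOd_isqd d
  have add : ∀ {x y z}, inOd d x → inOd d y → inOd d z → inOd d (x + y + z) :=
    fun hx hy hz => (ringOd d m hm).add_mem ((ringOd d m hm).add_mem hx hy) hz
  have mul : ∀ {x y}, inOd d x → inOd d y → inOd d (x * y) :=
    fun hx hy => (ringOd d m hm).mul_mem hx hy
  refine ⟨inU21_mul hU hV, ?_, ?_, ?_, ?_, ?_, ?_, ?_, ?_, ?_⟩ <;>
    rw [Matrix.mul_apply, Fin.sum_univ_three]
  · convert add (mul a00 b00) (mul s (mul a01 b10)) (mul a02 b20) using 1; field_simp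
  · convert add (mul a00 b01) (mul a01 b11) (mul a02 b21) using 1; field_simp
  · convert add (mul s (mul a10 b01)) (mul a11 b11) (mul s (mul a12 b21)) using 1; field_simp
  · convert add (mul a10 b02) (mul a11 b12) (mul a12 b22) using 1; field_simp
  · convert add (mul a20 b02) (mul s (mul a21 b12)) (mul a22 b22) using 1; field_simp
  · convert add (mul a00 b02) (mul s (mul a01 b12)) (mul a02 b22) using 1; ring
  · convert add (mul a10 b00) (mul a11 b10) (mul a12 b20) using 1; field_simp
  · convert add (mul a20 b00) (mul s (mul a21 b10)) (mul a22 b20) using 1; field_simp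
  · convert add (mul a20 b01) (mul a21 b11) (mul a22 b21) using 1; field_simp

theorem gammaSd_one (d : ℕ) : GammaSd d 1 := by
  have h0 : inOd d 0 := ⟨0, 0, by simp⟩
  have h1 : inOd d 1 := ⟨1, 0, by simp⟩
  refine ⟨⟨isUnit_one, by simp⟩, ?_⟩
  simp [h0, h1]

/-- For `d ∈ {7,11}`, `Γ_s^(d)` is a subgroup of `U(2,1;J)`: it contains the identity
and is closed under matrix multiplication and matrix inversion. -/
theorem gammaSd_subgroup :
    ∀ d ∈ ({7, 11} : Set ℕ),
      GammaSd d 1 ∧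
      (∀ M N : Matrix (Fin 3) (Fin 3) ℂ, GammaSd d M → GammaSd d N → GammaSd d (M * N)) ∧
      (∀ M : Matrix (Fin 3) (Fin 3) ℂ, GammaSd d M → GammaSd d M⁻¹) := by
  intro d hd
  have key : ∃ m : ℤ, (d : ℤ) = 4 * m - 1 ∧ 0 < d := by
    rcases hd with rfl | rfl
    · exact ⟨2, by norm_num, by norm_num⟩
    · exact ⟨3, by norm_num, by norm_num⟩
  obtain ⟨m, hm, hpos⟩ := key
  exact ⟨gammaSd_one d, fun M N hM hN => gammaSd_mul m hm hpos hM hN,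
    fun M hM => gammaSd_inv m hm hM⟩
end
end
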